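/- The co-volume function cov : ℝ⁶ → ℝ is C¹-smooth and convex on ℝ⁶, and its partial derivatives are ∂cov/∂l_ij(l) = α_ij(l) for all l ∈ ℝ⁶ and all pairs 1 ≤ i < j ≤ 4. -/

import Mathlib

noncomputable section

open Real Set Filter

/-- The generalized Euclidean triangle angle `aᵢ(x)` opposite the side of length `x i`,
for a generalized triangle with (positive) side lengths `x 0, x 1, x 2`:
it is `π` if `x i ≥ x j + x k`, `0` if some other side is at least the sum of the
remaining two, and otherwise the usual Euclidean angle `arccos((xⱼ²+x_k²−xᵢ²)/(2xⱼx_k))`. -/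
noncomputable def genAngle (x : Fin 3 → ℝ) (i : Fin 3) : ℝ :=
  if x (i + 1) + x (i + 2) ≤ x i then Real.pi
  else if x i + x (i + 2) ≤ x (i + 1) ∨ x i + x (i + 1) ≤ x (i + 2) then 0
  else Real.arccos
    ((x (i + 1) ^ 2 + x (i + 2) ^ 2 - x i ^ 2) / (2 * x (i + 1) * x (i + 2)))

/-- The three side lengths `e^{(l₁₂+l₃₄)/2}, e^{(l₁₃+l₂₄)/2}, e^{(l₁₄+l₂₃)/2}` of the
generalized Euclidean triangle associated to a length vector `l ∈ ℝ⁶`.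
Edge indices: `0 ↔ {1,2}, 1 ↔ {1,3}, 2 ↔ {1,4}, 3 ↔ {2,3}, 4 ↔ {2,4}, 5 ↔ {3,4}`,
so opposite pairs of edges are `(0,5), (1,4), (2,3)`. -/
noncomputable def triSides (l : Fin 6 → ℝ) (k : Fin 3) : ℝ :=
  if k.val = 0 then Real.exp ((l 0 + l 5) / 2)
  else if k.val = 1 then Real.exp ((l 1 + l 4) / 2)
  else Real.exp ((l 2 + l 3) / 2)

/-- The quad (pair of opposite edges) containing the edge `p`. -/
def quadIndex (p : Fin 6) : Fin 3 :=
  if p.val = 0 ∨ p.val = 5 then 0 else if p.val = 1 ∨ p.val = 4 then 1 else 2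

/-- The extended dihedral angle `α_p(l)` of the generalized decorated tetrahedron with
length vector `l ∈ ℝ⁶` at the edge `p`. -/
noncomputable def dihedral (l : Fin 6 → ℝ) (p : Fin 6) : ℝ :=
  genAngle (triSides l) (quadIndex p)

/-- The edge index in `Fin 6` of the edge `{i,j}` of the tetrahedron on vertices `Fin 4`
(junk value for `i = j`). -/
def edgeOf (i j : Fin 4) : Fin 6 :=
  if (i.val = 0 ∧ j.val = 1) ∨ (i.val = 1 ∧ j.val = 0) then 0
  else if (i.val = 0 ∧ j.val = 2) ∨ (i.val = 2 ∧ j.val = 0) then 1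
  else if (i.val = 0 ∧ j.val = 3) ∨ (i.val = 3 ∧ j.val = 0) then 2
  else if (i.val = 1 ∧ j.val = 2) ∨ (i.val = 2 ∧ j.val = 1) then 3
  else if (i.val = 1 ∧ j.val = 3) ∨ (i.val = 3 ∧ j.val = 1) then 4
  else 5

/-- The two endpoints of the edge `p` of the tetrahedron. -/
def endPts (p : Fin 6) : Fin 4 × Fin 4 :=
  if p.val = 0 then (0, 1) else if p.val = 1 then (0, 2) else if p.val = 2 then (0, 3)
  else if p.val = 3 then (1, 2) else if p.val = 4 then (1, 3) else (2, 3)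

/-- The Lobachevsky function `Λ(x) = −∫₀ˣ ln|2 sin t| dt`. -/
noncomputable def lob (x : ℝ) : ℝ := -∫ t in (0:ℝ)..x, Real.log |2 * Real.sin t|

/-- The volume of the generalized decorated tetrahedron with length vector `l`. -/
noncomputable def vol6 (l : Fin 6 → ℝ) : ℝ := (1 / 2 : ℝ) * ∑ p : Fin 6, lob (dihedral l p)

/-- The co-volume function `cov(l) = 2 vol(l) + Σ α_p(l) l_p` on `ℝ⁶`. -/
noncomputable def cov6 (l : Fin 6 → ℝ) : ℝ := 2 * vol6 l + ∑ p : Fin 6, dihedral l p * l p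

/-- `𝓛 ⊂ ℝ⁶`: length vectors of genuine decorated ideal hyperbolic tetrahedra, i.e. those
whose associated generalized Euclidean triangle satisfies the strict triangle inequalities. -/
def Ldom : Set (Fin 6 → ℝ) :=
  {l | ∀ i : Fin 3, triSides l i < triSides l (i + 1) + triSides l (i + 2)}

/-- The action of `w ∈ ℝ⁴` on `l ∈ ℝ⁶`: `(w + l)_{ij} = l_{ij} + wᵢ + wⱼ`. -/
def act (w : Fin 4 → ℝ) (l : Fin 6 → ℝ) : Fin 6 → ℝ :=
  fun p => l p + w (endPts p).1 + w (endPts p).2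

/-- `ℝ̂⁴ = {w + 0 : w ∈ ℝ⁴} ⊂ ℝ⁶`. -/
def hatR4 : Set (Fin 6 → ℝ) := {x | ∃ w : Fin 4 → ℝ, x = act w 0}

/-- `i, j, k, h` are pairwise distinct, i.e. `{i,j,k,h} = {1,2,3,4}`. -/
def Distinct4 (i j k h : Fin 4) : Prop :=
  i ≠ j ∧ i ≠ k ∧ i ≠ h ∧ j ≠ k ∧ j ≠ h ∧ k ≠ h


theorem lob_integrable (a b : ℝ) :
    IntervalIntegrable (fun t => Real.log |2 * Real.sin t|) MeasureTheory.volume a b := by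
  have h : (fun t => Real.log |2 * Real.sin t|) = fun t => Real.log (2 * Real.sin t) := by
    funext t; rw [Real.log_abs]
  rw [h]
  apply MeromorphicOn.intervalIntegrable_log
  intro x _
  apply AnalyticAt.meromorphicAt
  fun_prop

theorem lob_continuous : Continuous lob := by
  unfold lob
  exact (intervalIntegral.continuous_primitive (fun a b => lob_integrable a b) 0).neg

theorem lob_hasDerivAt {x : ℝ} (h : 0 < Real.sin x) :
    HasDerivAt lob (-Real.log (2 * Real.sin x)) x := by
  unfold lob
  have hc : ∀ y, 0 < Real.sin y → ContinuousAt (fun t => Real.log |2 * Real.sin t|) y := by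
    intro y hy
    apply ContinuousAt.log (by fun_prop)
    positivity
  have h1 := intervalIntegral.integral_hasDerivAt_right (lob_integrable 0 x)
    (by
      apply ContinuousOn.stronglyMeasurableAtFilter (s := {y | 0 < Real.sin y})
        (isOpen_lt continuous_const Real.continuous_sin)
      · intro y hy; exact (hc y hy).continuousWithinAt
      · exact h) (hc x h)
  rw [Real.log_abs] at h1
  exact h1.neg

/-- triangle angle in arccos form -/
def triT (x y z : ℝ) : ℝ := Real.arccos ((y ^ 2 + z ^ 2 - x ^ 2) / (2 * y * z))

theorem triT_comm (x y z : ℝ) : triT x y z = triT x z y := by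
  unfold triT; congr 1; ring

theorem triT_pi {x y z : ℝ} (hy : 0 < y) (hz : 0 < z) (h : y + z ≤ x) : triT x y z = Real.pi := by
  unfold triT
  rw [Real.arccos_eq_pi, div_le_iff₀ (by positivity)]
  nlinarith

theorem triT_zero {x y z : ℝ} (hx : 0 < x) (hy : 0 < y) (hz : 0 < z) (h : x + z ≤ y) :
    triT x y z = 0 := by
  unfold triT
  rw [Real.arccos_eq_zero, le_div_iff₀ (by positivity)]
  nlinarith

theorem triT_nondeg {x y z : ℝ} (hx : 0 < x) (hy : 0 < y) (hz : 0 < z)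
    (h1 : x < y + z) (h2 : y < z + x) (h3 : z < x + y) :
    0 < triT x y z ∧ triT x y z < Real.pi ∧
    Real.cos (triT x y z) = (y ^ 2 + z ^ 2 - x ^ 2) / (2 * y * z) ∧
    Real.sin (triT x y z) =
      Real.sqrt ((x + y + z) * (y + z - x) * (z + x - y) * (x + y - z)) / (2 * x * y * z) * x := by
  have e1 : -1 < (y ^ 2 + z ^ 2 - x ^ 2) / (2 * y * z) := by
    rw [lt_div_iff₀ (by positivity)]; nlinarith
  have e2 : (y ^ 2 + z ^ 2 - x ^ 2) / (2 * y * z) < 1 := by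
    rw [div_lt_iff₀ (by positivity)]; nlinarith
  refine ⟨Real.arccos_pos.2 e2, ?_, Real.cos_arccos e1.le e2.le, ?_⟩
  · apply lt_of_le_of_ne (Real.arccos_le_pi _)
    intro h
    have := Real.arccos_eq_pi.1 h
    linarith
  · unfold triT
    rw [Real.sin_arccos]
    have : 1 - ((y ^ 2 + z ^ 2 - x ^ 2) / (2 * y * z)) ^ 2 =
      ((x + y + z) * (y + z - x) * (z + x - y) * (x + y - z)) / (2 * y * z) ^ 2 := by
      field_simp; ring
    rw [this, Real.sqrt_div' _ (by positivity), Real.sqrt_sq (by positivity)]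
    field_simp

theorem triT_laws {x y z : ℝ} (hx : 0 < x) (hy : 0 < y) (hz : 0 < z)
    (h1 : x < y + z) (h2 : y < z + x) (h3 : z < x + y) :
    triT x y z + triT y z x + triT z x y = Real.pi ∧ ∃ s > 0,
      Real.sin (triT x y z) = s * x ∧ Real.sin (triT y z x) = s * y ∧
      Real.sin (triT z x y) = s * z := by
  obtain ⟨a0, a1, a2, a3⟩ := triT_nondeg hx hy hz h1 h2 h3
  obtain ⟨b0, b1, b2, b3⟩ := triT_nondeg hy hz hx h2 h3 h1
  obtain ⟨c0, c1, c2, c3⟩ := triT_nondeg hz hx hy h3 h1 h2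
  set K := (x + y + z) * (y + z - x) * (z + x - y) * (x + y - z) with hK
  have hKpos : 0 < K := by
    have := sub_pos.2 h1
    have := sub_pos.2 h2
    have := sub_pos.2 h3
    positivity
  have k1 : (y + z + x) * (z + x - y) * (x + y - z) * (y + z - x) = K := by rw [hK]; ring
  have k2 : (z + x + y) * (x + y - z) * (y + z - x) * (z + x - y) = K := by rw [hK]; ring
  have d1 : 2 * y * z * x = 2 * x * y * z := by ring
  have d2 : 2 * z * x * y = 2 * x * y * z := by ring
  rw [k1, d1] at b3
  rw [k2, d2] at c3
  have hs2 : (Real.sqrt K / (2 * x * y * z)) ^ 2 = K / (2 * x * y * z) ^ 2 := by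
    rw [div_pow, Real.sq_sqrt hKpos.le]
  set s := Real.sqrt K / (2 * x * y * z) with hs
  have hspos : 0 < s := by have := Real.sqrt_pos.2 hKpos; positivity
  refine ⟨?_, s, hspos, a3, b3, c3⟩
  set A := triT x y z
  set B := triT y z x
  set C := triT z x y
  have hsin : 0 < Real.sin (A + B) := by
    have : Real.sin (A + B) = s * z := by
      rw [Real.sin_add, a2, a3, b2, b3]; field_simp; ring
    rw [this]; positivity
  have hAB : A + B < Real.pi := by
    by_contra! hcon
    have := Real.sin_nonpos_of_nonpos_of_neg_pi_le (x := A + B - 2 * Real.pi) (by linarith) (by linarith)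
    rw [Real.sin_sub_two_pi] at this
    linarith
  have hcos : Real.cos (A + B) = Real.cos (Real.pi - C) := by
    rw [Real.cos_pi_sub, Real.cos_add, a2, a3, b2, b3, c2]
    have : s * x * (s * y) = K / (2 * x * y * z) ^ 2 * (x * y) := by rw [← hs2]; ring
    rw [this, hK]
    field_simp; ring
  have := Real.injOn_cos ⟨by linarith, hAB.le⟩ ⟨by linarith, by linarith⟩ hcos
  linarith

theorem cot_form {a b c p q r : ℝ} (ha : 0 < Real.sin a) (hb : 0 < Real.sin b)
    (hc : 0 < Real.sin c) (h : a + b + c = Real.pi) (hv : p + q + r = 0) :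
    0 ≤ p * (p * Real.cos a / Real.sin a) + q * (q * Real.cos b / Real.sin b)
      + r * (r * Real.cos c / Real.sin c) := by
  have hC : c = Real.pi - (a + b) := by linarith
  have hr : r = -(p + q) := by linarith
  have hcs : Real.sin c = Real.sin a * Real.cos b + Real.cos a * Real.sin b := by
    rw [hC, Real.sin_pi_sub, Real.sin_add]
  have hcc : Real.cos c = -(Real.cos a * Real.cos b - Real.sin a * Real.sin b) := by
    rw [hC, Real.cos_pi_sub, Real.cos_add]
  have e1 := Real.sin_sq_add_cos_sq a
  have e2 := Real.sin_sq_add_cos_sq b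
  have hPR : Real.cos a / Real.sin a + Real.cos c / Real.sin c
      = Real.sin b / (Real.sin a * Real.sin c) := by
    have hb' : Real.sin b = Real.sin a * Real.cos c + Real.cos a * Real.sin c := by
      rw [← Real.sin_add, show a + c = Real.pi - b by linarith, Real.sin_pi_sub]
    rw [hb']
    field_simp
    ring
  have hpos : 0 < Real.cos a / Real.sin a + Real.cos c / Real.sin c := by
    rw [hPR]; positivity
  have hone : (Real.cos a / Real.sin a) * (Real.cos b / Real.sin b)
      + (Real.cos b / Real.sin b) * (Real.cos c / Real.sin c)
      + (Real.cos c / Real.sin c) * (Real.cos a / Real.sin a) = 1 := by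
    field_simp
    rw [hcs, hcc]
    ring
  have hform : p * (p * Real.cos a / Real.sin a) + q * (q * Real.cos b / Real.sin b)
      + r * (r * Real.cos c / Real.sin c) = p ^ 2 * (Real.cos a / Real.sin a)
      + q ^ 2 * (Real.cos b / Real.sin b) + (p + q) ^ 2 * (Real.cos c / Real.sin c) := by
    rw [hr]; ring
  rw [hform]
  generalize Real.cos a / Real.sin a = P at *
  generalize Real.cos b / Real.sin b = Q at *
  generalize Real.cos c / Real.sin c = R at *
  have : (p ^ 2 * P + q ^ 2 * Q + (p + q) ^ 2 * R) * (P + R)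
      = ((P + R) * p + R * q) ^ 2 + q ^ 2 := by
    linear_combination q ^ 2 * hone
  by_contra! hcon
  nlinarith [mul_pos_of_neg_of_neg hcon (neg_neg_of_pos hpos), sq_nonneg ((P + R) * p + R * q), sq_nonneg q]

/-- the functional maximised over the angle simplex -/
def covQ (a b c u v w : ℝ) : ℝ := lob a + lob b + lob c + a * u + b * v + c * w

theorem seg_lob {b p : ℝ} {t : ℝ} (h : 0 < Real.sin (b + t * p)) :
    HasDerivAt (fun t => lob (b + t * p)) (-(p * Real.log (2 * Real.sin (b + t * p)))) t := by
  have h1 : HasDerivAt (fun t : ℝ => b + t * p) p t := by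
    simpa using ((hasDerivAt_id t).mul_const p).const_add b
  have := (lob_hasDerivAt h).comp t h1
  convert! this using 1
  ring

theorem seg_log {b p : ℝ} {t : ℝ} (h : 0 < Real.sin (b + t * p)) :
    HasDerivAt (fun t => p * Real.log (2 * Real.sin (b + t * p)))
      (p * (p * Real.cos (b + t * p) / Real.sin (b + t * p))) t := by
  have h1 : HasDerivAt (fun t : ℝ => b + t * p) p t := by
    simpa using ((hasDerivAt_id t).mul_const p).const_add b
  have h2 := ((h1.sin.const_mul 2).log (by positivity)).const_mul p
  convert! h2 using 1
  field_simp

theorem covQ_le_of_crit {a b c a' b' c' u v w k : ℝ}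
    (ha : 0 < a) (hb : 0 < b) (hc : 0 < c) (hs : a + b + c = Real.pi)
    (ha' : 0 ≤ a') (hb' : 0 ≤ b') (hc' : 0 ≤ c') (hs' : a' + b' + c' = Real.pi)
    (hu : u = Real.log (2 * Real.sin a) + k) (hv : v = Real.log (2 * Real.sin b) + k)
    (hw : w = Real.log (2 * Real.sin c) + k) :
    covQ a' b' c' u v w ≤ covQ a b c u v w := by
  obtain ⟨p, hp⟩ : ∃ p, p = a' - a := ⟨_, rfl⟩
  obtain ⟨q, hq⟩ : ∃ q, q = b' - b := ⟨_, rfl⟩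
  obtain ⟨r, hr⟩ : ∃ r, r = c' - c := ⟨_, rfl⟩
  have hpqr : p + q + r = 0 := by linarith
  have pos : ∀ x x' d t : ℝ, 0 < x → 0 ≤ x' → d = x' - x → 0 ≤ t → t < 1 → 0 < x + t * d := by
    intro x x' d t h1 h2 h3 h4 h5
    rw [h3]
    nlinarith [mul_nonneg h4 h2, mul_pos h1 (sub_pos.2 h5)]
  have sinpos : ∀ t : ℝ, 0 ≤ t → t < 1 → 0 < Real.sin (a + t * p) ∧ 0 < Real.sin (b + t * q) ∧
      0 < Real.sin (c + t * r) := by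
    intro t h0 h1
    have e1 := pos a a' p t ha ha' hp h0 h1
    have e2 := pos b b' q t hb hb' hq h0 h1
    have e3 := pos c c' r t hc hc' hr h0 h1
    have e4 : (a + t * p) + (b + t * q) + (c + t * r) = Real.pi := by
      linear_combination hs + t * hpqr
    refine ⟨Real.sin_pos_of_pos_of_lt_pi e1 (by linarith),
      Real.sin_pos_of_pos_of_lt_pi e2 (by linarith),
      Real.sin_pos_of_pos_of_lt_pi e3 (by linarith)⟩
  let g : ℝ → ℝ := fun t => p * Real.log (2 * Real.sin (a + t * p))
    + q * Real.log (2 * Real.sin (b + t * q)) + r * Real.log (2 * Real.sin (c + t * r))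
  have hg : ∀ t, 0 ≤ t → t < 1 → HasDerivAt g
      (p * (p * Real.cos (a + t * p) / Real.sin (a + t * p))
      + q * (q * Real.cos (b + t * q) / Real.sin (b + t * q))
      + r * (r * Real.cos (c + t * r) / Real.sin (c + t * r))) t := by
    intro t h0 h1
    obtain ⟨s1, s2, s3⟩ := sinpos t h0 h1
    exact ((seg_log s1).add (seg_log s2)).add (seg_log s3)
  have hgm : MonotoneOn g (Set.Ico 0 1) := by
    apply monotoneOn_of_hasDerivWithinAt_nonneg (convex_Ico 0 1)
    · intro t ht
      exact (hg t ht.1 ht.2).continuousAt.continuousWithinAt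
    · intro t ht
      rw [interior_Ico] at ht
      exact (hg t ht.1.le ht.2).hasDerivWithinAt
    · intro t ht
      rw [interior_Ico] at ht
      obtain ⟨s1, s2, s3⟩ := sinpos t ht.1.le ht.2
      apply cot_form s1 s2 s3 _ hpqr
      linear_combination hs + t * hpqr
  have hg0 : g 0 = p * u + q * v + r * w := by
    simp only [g, zero_mul, add_zero, hu, hv, hw]
    linear_combination -k * hpqr
  let f : ℝ → ℝ := fun t => lob (a + t * p) + lob (b + t * q) + lob (c + t * r)
    + t * (p * u + q * v + r * w)
  have hf : AntitoneOn f (Set.Icc 0 1) := by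
    apply antitoneOn_of_hasDerivWithinAt_nonpos (f' := fun t => -g t + (p * u + q * v + r * w))
      (convex_Icc 0 1)
    · have := lob_continuous
      exact Continuous.continuousOn (by fun_prop)
    · intro t ht
      rw [interior_Icc] at ht
      obtain ⟨s1, s2, s3⟩ := sinpos t ht.1.le ht.2
      have h2 : HasDerivAt (fun t : ℝ => t * (p * u + q * v + r * w)) (p * u + q * v + r * w) t := by
        simpa using (hasDerivAt_id t).mul_const (p * u + q * v + r * w)
      have h1 := (((seg_lob s1).add (seg_lob s2)).add (seg_lob s3)).add h2
      apply HasDerivAt.hasDerivWithinAt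
      convert! h1 using 1
      simp only [g]; ring
    · intro t ht
      rw [interior_Icc] at ht
      have := hgm ⟨le_refl 0, one_pos⟩ ⟨ht.1.le, ht.2⟩ ht.1.le
      rw [hg0] at this
      linarith
  have := hf ⟨le_refl 0, zero_le_one⟩ ⟨zero_le_one, le_refl 1⟩ zero_le_one
  simp only [f, hp, hq, hr] at this
  simp only [one_mul, zero_mul, add_zero, add_sub_cancel] at this
  unfold covQ
  linarith

/-- angle in log coordinates -/
def angE (u v w : ℝ) : ℝ := triT (Real.exp u) (Real.exp v) (Real.exp w)

theorem angE_comm (u v w : ℝ) : angE u v w = angE u w v := triT_comm _ _ _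

theorem angE_nonneg (u v w : ℝ) : 0 ≤ angE u v w := Real.arccos_nonneg _

theorem angE_continuous : Continuous (fun x : ℝ × ℝ × ℝ => angE x.1 x.2.1 x.2.2) := by
  unfold angE triT
  apply Real.continuous_arccos.comp
  apply Continuous.div (by fun_prop) (by fun_prop)
  intro x
  positivity

/-- the value function -/
def covF (u v w : ℝ) : ℝ := covQ (angE u v w) (angE v w u) (angE w u v) u v w

theorem covQ_rot (a b c u v w : ℝ) : covQ a b c u v w = covQ b c a v w u := by
  unfold covQ; ring

theorem covF_rot (u v w : ℝ) : covF u v w = covF v w u := by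
  unfold covF; rw [covQ_rot]

theorem covQ_le_nondeg {a b c u v w : ℝ} (ha : 0 ≤ a) (hb : 0 ≤ b) (hc : 0 ≤ c)
    (hs : a + b + c = Real.pi) (h1 : Real.exp u < Real.exp v + Real.exp w)
    (h2 : Real.exp v < Real.exp w + Real.exp u) (h3 : Real.exp w < Real.exp u + Real.exp v) :
    covQ a b c u v w ≤ covF u v w := by
  have eu := Real.exp_pos u
  have ev := Real.exp_pos v
  have ew := Real.exp_pos w
  obtain ⟨hsum, s, hs0, l1, l2, l3⟩ := triT_laws eu ev ew h1 h2 h3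
  have key : ∀ y, y = Real.log (2 * (s * Real.exp y)) + -Real.log (2 * s) := by
    intro y
    rw [← mul_assoc, Real.log_mul (by positivity) (Real.exp_pos y).ne', Real.log_exp]
    ring
  apply covQ_le_of_crit (k := -Real.log (2 * s)) (triT_nondeg eu ev ew h1 h2 h3).1
    (triT_nondeg ev ew eu h2 h3 h1).1
    (triT_nondeg ew eu ev h3 h1 h2).1 hsum ha hb hc hs
  · rw [l1]; exact key u
  · rw [l2]; exact key v
  · rw [l3]; exact key w

theorem angE_deg {u v w : ℝ} (h : Real.exp v + Real.exp w ≤ Real.exp u) :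
    angE u v w = Real.pi ∧ angE v w u = 0 ∧ angE w u v = 0 := by
  have eu := Real.exp_pos u
  have ev := Real.exp_pos v
  have ew := Real.exp_pos w
  refine ⟨triT_pi ev ew h, ?_, triT_zero ew eu ev (by linarith)⟩
  rw [angE_comm]
  exact triT_zero ev eu ew h

theorem covF_deg {u v w : ℝ} (h : Real.exp v + Real.exp w ≤ Real.exp u) :
    covF u v w = lob Real.pi + lob 0 + lob 0 + Real.pi * u := by
  obtain ⟨h1, h2, h3⟩ := angE_deg h
  unfold covF covQ
  rw [h1, h2, h3]; ring

theorem covQ_le_deg {a b c u v w : ℝ} (ha : 0 ≤ a) (hb : 0 ≤ b) (hc : 0 ≤ c)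
    (hs : a + b + c = Real.pi) (h1 : Real.exp v + Real.exp w ≤ Real.exp u) :
    covQ a b c u v w ≤ covF u v w := by
  have eu := Real.exp_pos u
  have ev := Real.exp_pos v
  have ew := Real.exp_pos w
  obtain ⟨u0, hu0⟩ : ∃ u0, Real.exp u0 = Real.exp v + Real.exp w :=
    ⟨Real.log (Real.exp v + Real.exp w), Real.exp_log (by positivity)⟩
  have hle : u0 ≤ u := by rw [← Real.exp_le_exp, hu0]; exact h1
  have hb0 : covQ a b c u0 v w ≤ covF u0 v w := by
    have hQ : Continuous (fun t => covQ a b c t v w) := by unfold covQ; fun_prop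
    have hF : Continuous (fun t => covF t v w) := by
      have := lob_continuous
      have c1 : Continuous (fun t => angE t v w) :=
        angE_continuous.comp (f := fun t => (t, v, w)) (by fun_prop)
      have c2 : Continuous (fun t => angE v w t) :=
        angE_continuous.comp (f := fun t => (v, w, t)) (by fun_prop)
      have c3 : Continuous (fun t => angE w t v) :=
        angE_continuous.comp (f := fun t => (w, t, v)) (by fun_prop)
      unfold covF covQ
      fun_prop
    apply le_of_tendsto_of_tendsto (b := nhdsWithin u0 (Set.Iio u0))
      (hQ.continuousAt.continuousWithinAt (s := Set.Iio u0))
      (hF.continuousAt.continuousWithinAt (s := Set.Iio u0))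
    have n1 : ∀ᶠ t in nhds u0, Real.exp v < Real.exp w + Real.exp t := by
      apply ContinuousAt.eventually_lt continuousAt_const (by fun_prop)
      linarith
    have n2 : ∀ᶠ t in nhds u0, Real.exp w < Real.exp t + Real.exp v := by
      apply ContinuousAt.eventually_lt continuousAt_const (by fun_prop)
      linarith
    filter_upwards [nhdsWithin_le_nhds n1, nhdsWithin_le_nhds n2, self_mem_nhdsWithin] with t t1 t2 t3
    refine covQ_le_nondeg ha hb hc hs ?_ t1 t2
    rw [← hu0]
    exact Real.exp_lt_exp.2 t3
  rw [covF_deg hu0.ge] at hb0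
  rw [covF_deg h1]
  unfold covQ at *
  have : a * (u - u0) ≤ Real.pi * (u - u0) :=
    mul_le_mul_of_nonneg_right (by linarith) (by linarith)
  linarith

theorem covQ_le {a b c : ℝ} (u v w : ℝ) (ha : 0 ≤ a) (hb : 0 ≤ b) (hc : 0 ≤ c)
    (hs : a + b + c = Real.pi) : covQ a b c u v w ≤ covF u v w := by
  rcases le_or_gt (Real.exp v + Real.exp w) (Real.exp u) with h1 | h1
  · exact covQ_le_deg ha hb hc hs h1
  rcases le_or_gt (Real.exp w + Real.exp u) (Real.exp v) with h2 | h2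
  · rw [covQ_rot, covF_rot]
    exact covQ_le_deg hb hc ha (by linarith) h2
  rcases le_or_gt (Real.exp u + Real.exp v) (Real.exp w) with h3 | h3
  · rw [covQ_rot, covF_rot, covQ_rot, covF_rot]
    exact covQ_le_deg hc ha hb (by linarith) h3
  exact covQ_le_nondeg ha hb hc hs h1 h2 h3

theorem angE_sum (u v w : ℝ) : angE u v w + angE v w u + angE w u v = Real.pi := by
  rcases le_or_gt (Real.exp v + Real.exp w) (Real.exp u) with h1 | h1
  · obtain ⟨e1, e2, e3⟩ := angE_deg h1
    linarith
  rcases le_or_gt (Real.exp w + Real.exp u) (Real.exp v) with h2 | h2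
  · obtain ⟨e1, e2, e3⟩ := angE_deg h2
    linarith
  rcases le_or_gt (Real.exp u + Real.exp v) (Real.exp w) with h3 | h3
  · obtain ⟨e1, e2, e3⟩ := angE_deg h3
    linarith
  exact (triT_laws (Real.exp_pos u) (Real.exp_pos v) (Real.exp_pos w) h1 h2 h3).1

theorem covF_subgrad (u v w u' v' w' : ℝ) :
    covF u v w + angE u v w * (u' - u) + angE v w u * (v' - v) + angE w u v * (w' - w)
      ≤ covF u' v' w' := by
  have := covQ_le u' v' w' (angE_nonneg u v w) (angE_nonneg v w u) (angE_nonneg w u v)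
    (angE_sum u v w)
  refine le_trans (le_of_eq ?_) this
  unfold covF covQ; ring

theorem genAngle_eq (x : Fin 3 → ℝ) (hx : ∀ i, 0 < x i) (i : Fin 3) :
    genAngle x i = triT (x i) (x (i + 1)) (x (i + 2)) := by
  unfold genAngle
  split_ifs with h1 h2
  · exact (triT_pi (hx _) (hx _) h1).symm
  · rcases h2 with h2 | h2
    · exact (triT_zero (hx _) (hx _) (hx _) h2).symm
    · rw [triT_comm]
      exact (triT_zero (hx _) (hx _) (hx _) h2).symm
  · rfl

theorem dihedral_eq (l : Fin 6 → ℝ) :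
    (dihedral l 0 = angE ((l 0 + l 5) / 2) ((l 1 + l 4) / 2) ((l 2 + l 3) / 2) ∧
     dihedral l 1 = angE ((l 1 + l 4) / 2) ((l 2 + l 3) / 2) ((l 0 + l 5) / 2) ∧
     dihedral l 2 = angE ((l 2 + l 3) / 2) ((l 0 + l 5) / 2) ((l 1 + l 4) / 2)) ∧
    dihedral l 3 = dihedral l 2 ∧ dihedral l 4 = dihedral l 1 ∧ dihedral l 5 = dihedral l 0 := by
  have hx : ∀ i, 0 < triSides l i := by
    intro i; unfold triSides; split_ifs <;> positivity
  refine ⟨⟨?_, ?_, ?_⟩, rfl, rfl, rfl⟩ <;>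
  · unfold dihedral
    rw [genAngle_eq _ hx]
    rfl

theorem cov6_eq (l : Fin 6 → ℝ) :
    cov6 l = 2 * covF ((l 0 + l 5) / 2) ((l 1 + l 4) / 2) ((l 2 + l 3) / 2) := by
  obtain ⟨⟨h0, h1, h2⟩, h3, h4, h5⟩ := dihedral_eq l
  unfold cov6 vol6 covF covQ
  simp only [Fin.sum_univ_six, h3, h4, h5]
  rw [h0, h1, h2]
  ring

theorem dihedral_continuous (p : Fin 6) : Continuous (fun l => dihedral l p) := by
  have c0 : Continuous (fun l : Fin 6 → ℝ => dihedral l 0) := by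
    simp only [fun l => (dihedral_eq l).1.1]
    exact angE_continuous.comp
      (f := fun l : Fin 6 → ℝ => ((l 0 + l 5) / 2, (l 1 + l 4) / 2, (l 2 + l 3) / 2)) (by fun_prop)
  have c1 : Continuous (fun l : Fin 6 → ℝ => dihedral l 1) := by
    simp only [fun l => (dihedral_eq l).1.2.1]
    exact angE_continuous.comp
      (f := fun l : Fin 6 → ℝ => ((l 1 + l 4) / 2, (l 2 + l 3) / 2, (l 0 + l 5) / 2)) (by fun_prop)
  have c2 : Continuous (fun l : Fin 6 → ℝ => dihedral l 2) := by
    simp only [fun l => (dihedral_eq l).1.2.2]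
    exact angE_continuous.comp
      (f := fun l : Fin 6 → ℝ => ((l 2 + l 3) / 2, (l 0 + l 5) / 2, (l 1 + l 4) / 2)) (by fun_prop)
  fin_cases p
  exacts [c0, c1, c2, c2, c1, c0]

/-- the candidate derivative of the co-volume function -/
def covGrad (l : Fin 6 → ℝ) : (Fin 6 → ℝ) →L[ℝ] ℝ :=
  ∑ p : Fin 6, dihedral l p • ContinuousLinearMap.proj (R := ℝ) (φ := fun _ : Fin 6 => ℝ) p

theorem covGrad_apply (l m : Fin 6 → ℝ) : covGrad l m = ∑ p : Fin 6, dihedral l p * m p := by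
  simp [covGrad]

theorem covGrad_continuous : Continuous covGrad := by
  unfold covGrad
  apply continuous_finsetSum
  intro p _
  exact (dihedral_continuous p).smul continuous_const

theorem cov6_subgrad (l m : Fin 6 → ℝ) : cov6 l + covGrad l (m - l) ≤ cov6 m := by
  obtain ⟨⟨h0, h1, h2⟩, h3, h4, h5⟩ := dihedral_eq l
  have := covF_subgrad ((l 0 + l 5) / 2) ((l 1 + l 4) / 2) ((l 2 + l 3) / 2)
    ((m 0 + m 5) / 2) ((m 1 + m 4) / 2) ((m 2 + m 3) / 2)
  rw [← h0, ← h1, ← h2] at this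
  rw [cov6_eq l, cov6_eq m, covGrad_apply, Fin.sum_univ_six, h3, h4, h5]
  simp only [Pi.sub_apply]
  linarith

theorem cov6_hasFDerivAt (l : Fin 6 → ℝ) : HasFDerivAt cov6 (covGrad l) l := by
  rw [hasFDerivAt_iff_isLittleO, Asymptotics.isLittleO_iff]
  intro ε hε
  have hc := covGrad_continuous.continuousAt (x := l)
  filter_upwards [Metric.continuousAt_iff'.1 hc ε hε] with m hm
  rw [dist_eq_norm] at hm
  have e1 := cov6_subgrad l m
  have e2 := cov6_subgrad m l
  have e3 : covGrad m (l - m) = -covGrad m (m - l) := by rw [← map_neg, neg_sub]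
  have e4 : (covGrad m - covGrad l) (m - l) ≤ ε * ‖m - l‖ :=
    (le_abs_self _).trans ((ContinuousLinearMap.le_opNorm _ _).trans
      (mul_le_mul_of_nonneg_right hm.le (norm_nonneg _)))
  rw [sub_apply] at e4
  rw [Real.norm_eq_abs, abs_of_nonneg (by linarith)]
  linarith

/-- the co-volume function `cov : ℝ⁶ → ℝ` is `C¹`, convex, and
`∂cov/∂l_p = α_p`. -/
theorem cov6_contDiff_convex_deriv :
    ContDiff ℝ 1 cov6 ∧ ConvexOn ℝ Set.univ cov6 ∧
    ∀ (l : Fin 6 → ℝ) (p : Fin 6), fderiv ℝ cov6 l (Pi.single p 1) = dihedral l p := by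
  refine ⟨contDiff_one_iff_hasFDerivAt.2 ⟨covGrad, covGrad_continuous, cov6_hasFDerivAt⟩, ?_, ?_⟩
  · refine ⟨convex_univ, ?_⟩
    intro x _ y _ a b ha hb hab
    have e1 := cov6_subgrad (a • x + b • y) x
    have e2 := cov6_subgrad (a • x + b • y) y
    have e3 : a * covGrad (a • x + b • y) (x - (a • x + b • y))
        + b * covGrad (a • x + b • y) (y - (a • x + b • y)) = 0 := by
      simp only [map_sub, map_add, map_smul, smul_eq_mul]
      generalize covGrad (a • x + b • y) x = X
      generalize covGrad (a • x + b • y) y = Y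
      linear_combination -(a * X + b * Y) * hab
    have f1 := mul_le_mul_of_nonneg_left e1 ha
    have f2 := mul_le_mul_of_nonneg_left e2 hb
    have f3 : a * cov6 (a • x + b • y) + b * cov6 (a • x + b • y) = cov6 (a • x + b • y) := by
      rw [← add_mul, hab, one_mul]
    simp only [smul_eq_mul]
    linarith
  · intro l p
    rw [(cov6_hasFDerivAt l).fderiv, covGrad_apply]
    simp [Pi.single_apply]
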